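/- Let G be a finite simple graph with at least 2 vertices, let r be its rank-width, and let c be its clique-width. Then r ≤ c and c ≤ 2^{r+1} − 1. -/

import Mathlib

open scoped Classical in
/-- The rank over `ℤ/2` of the biadjacency matrix of the bipartition `(A, B)` of the
vertex set of `G`: the `A × B` matrix whose `(a, b)` entry is `1` if `a` and `b` are
adjacent and `0` otherwise.  (It is encoded as a `V × V` matrix padded with zeros
outside `A × B`, which has the same rank.) -/
noncomputable def biadjRank {V : Type*} [Fintype V] (G : SimpleGraph V)
    (A B : Set V) : ℕ :=
  (Matrix.of fun a b : V =>
    if a ∈ A ∧ b ∈ B ∧ G.Adj a b then (1 : ZMod 2) else 0).rank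

/-- The rank-width of `G`: the minimum, over all rank decompositions — finite trees
`T` in which every vertex has degree 1 or 3 and whose leaves are in bijection with
the vertices of `G` — of the maximum, over the edges of `T`, of the rank over `ℤ/2`
of the biadjacency matrix of the bipartition of the vertex set induced by the two
components of `T` minus that edge. -/
noncomputable def rankWidth {V : Type*} [Fintype V] (G : SimpleGraph V) : ℕ :=
  sInf {r : ℕ | ∃ (W : Type) (T : SimpleGraph W), Finite W ∧ T.IsTree ∧
    (∀ w : W, (T.neighborSet w).ncard = 1 ∨ (T.neighborSet w).ncard = 3) ∧
    ∃ f : V → W, Function.Injective f ∧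
      (∀ w : W, (T.neighborSet w).ncard = 1 ↔ w ∈ Set.range f) ∧
      ∀ a b : W, T.Adj a b →
        biadjRank G {v : V | (T.deleteEdges {s(a, b)}).Reachable (f v) a}
                    {v : V | (T.deleteEdges {s(a, b)}).Reachable (f v) b} ≤ r}

/-- Clique-width expressions over `c` labels: create a single labelled vertex,
take a disjoint union, relabel all vertices of one label to another label, or
join all pairs consisting of a vertex of one label and one of another label. -/
inductive CW (c : ℕ) : Type where
  | single : Fin c → CW c
  | union : CW c → CW c → CW c
  | relabel : Fin c → Fin c → CW c → CW c
  | join : Fin c → Fin c → CW c → CW c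

/-- The vertex type of the labelled graph built by a clique-width expression. -/
def CW.Vt {c : ℕ} : CW c → Type
  | .single _ => Unit
  | .union a b => a.Vt ⊕ b.Vt
  | .relabel _ _ a => a.Vt
  | .join _ _ a => a.Vt

/-- The labelling of the labelled graph built by a clique-width expression. -/
def CW.label {c : ℕ} : (e : CW c) → e.Vt → Fin c
  | .single l, _ => l
  | .union a _, Sum.inl v => a.label v
  | .union _ b, Sum.inr v => b.label v
  | .relabel x y a, v => if a.label v = x then y else a.label v
  | .join _ _ a, v => a.label v

/-- The adjacency relation of the labelled graph built by a clique-width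
expression; the join operation applies only to two *distinct* labels. -/
def CW.adj {c : ℕ} : (e : CW c) → e.Vt → e.Vt → Prop
  | .single _, _, _ => False
  | .union a _, Sum.inl u, Sum.inl v => a.adj u v
  | .union _ b, Sum.inr u, Sum.inr v => b.adj u v
  | .union _ _, Sum.inl _, Sum.inr _ => False
  | .union _ _, Sum.inr _, Sum.inl _ => False
  | .relabel _ _ a, u, v => a.adj u v
  | .join x y a, u, v =>
      a.adj u v ∨ (x ≠ y ∧ ((a.label u = x ∧ a.label v = y) ∨
        (a.label u = y ∧ a.label v = x)))

/-- The clique-width of a graph `G`: the minimum number `c` of labels for which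
some clique-width expression over `c` labels builds a labelled graph whose
underlying graph is isomorphic to `G`. -/
noncomputable def cliqueWidth {V : Type*} (G : SimpleGraph V) : ℕ :=
  sInf {c : ℕ | ∃ (e : CW c) (φ : V ≃ e.Vt),
    ∀ u v : V, G.Adj u v ↔ e.adj (φ u) (φ v)}

/-!
Rank-width and clique-width both speak about hierarchical partitions of the vertex set into
singletons: a rank decomposition of width at most `r` amounts to a rooted binary one all of whose
parts have cut-rank at most `r`. In a clique-width expression, vertices of a part with the same
label have the same neighbours outside the part, so the cut-rank of every part is at most the
number of labels. Conversely, over `ℤ/2` a part of cut-rank at most `r` has at most `2 ^ r - 1`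
nonempty neighbourhoods across its cut. Labelling vertices by these neighbourhoods, the union of
two parts needs at most `2 * (2 ^ r - 1) + 1 = 2 ^ (r + 1) - 1` labels, the last one being for the
empty neighbourhood; one joins the appropriate labels, then merges labels to match the
neighbourhoods of the union.
-/

section MatrixRank

variable {m n K : Type*} [Finite m] [Fintype n] [Field K]

theorem rank_le_ncard_nonzero_rows (M : Matrix m n K) :
    M.rank ≤ (Set.range M.row \ {0}).ncard := by
  have hfin : (Set.range M.row \ {0}).Finite := Set.toFinite _
  have := hfin.fintype
  rw [M.rank_eq_finrank_span_row, ← Submodule.span_sdiff_singleton_zero,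
    Set.ncard_eq_toFinset_card']
  exact finrank_span_le_card _

theorem ncard_nonzero_rows_le [Finite K] (M : Matrix m n K) :
    (Set.range M.row \ {0}).ncard ≤ Nat.card K ^ M.rank - 1 := by
  have hsub : Set.range M.row \ {0} ⊆ ↑(Submodule.span K (Set.range M.row)) \ {0} :=
    Set.sdiff_subset_sdiff_left Submodule.subset_span
  refine (Set.ncard_le_ncard hsub (Set.toFinite _)).trans_eq ?_
  rw [Set.ncard_sdiff_singleton_of_mem (zero_mem _), M.rank_eq_finrank_span_row]
  congr 1
  exact Module.natCard_eq_pow_finrank (K := K)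

end MatrixRank

section CutRank

theorem indicator_one_injective {V M : Type*} [MulZeroOneClass M] [Nontrivial M] :
    Function.Injective fun s : Set V => s.indicator (1 : V → M) :=
  fun _ _ h => Set.indicator_one_inj M h

theorem range_row_indicator_sdiff_zero {ι V M : Type*} [MulZeroOneClass M] [Nontrivial M]
    (S : ι → Set V) :
    Set.range (Matrix.of fun u => (S u).indicator (1 : V → M)).row \ {0} =
      (fun s : Set V => s.indicator 1) '' (Set.range S \ {∅}) := by
  rw [Set.image_sdiff indicator_one_injective, ← Set.range_comp, Set.image_singleton,
    Set.indicator_empty]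
  rfl

variable {V : Type*} [Fintype V] (G : SimpleGraph V)

open scoped Classical in
theorem biadjRank_mono {A B A' B' : Set V} (hA : A ⊆ A') (hB : B ⊆ B') :
    biadjRank G A B ≤ biadjRank G A' B' := by
  have restrict : (Matrix.of fun a b : V =>
        if a ∈ A ∧ b ∈ B ∧ G.Adj a b then (1 : ZMod 2) else 0) =
      Matrix.diagonal (fun a => if a ∈ A then 1 else 0) *
        ((Matrix.of fun a b : V => if a ∈ A' ∧ b ∈ B' ∧ G.Adj a b then 1 else 0) *
          Matrix.diagonal (fun b => if b ∈ B then 1 else 0)) := by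
    ext a b
    rw [Matrix.diagonal_mul, Matrix.mul_diagonal, Matrix.of_apply, Matrix.of_apply]
    have := @hA a
    have := @hB b
    grind
  rw [biadjRank, restrict]
  exact (Matrix.rank_mul_le_right _ _).trans (Matrix.rank_mul_le_left _ _)

open scoped Classical in
theorem biadjRank_comm (A B : Set V) : biadjRank G A B = biadjRank G B A := by
  rw [biadjRank, biadjRank, ← Matrix.rank_transpose]
  congr 1
  ext a b
  exact if_congr (by rw [G.adj_comm, and_left_comm]) rfl rfl

/-- The cut-rank of `A`: the rank over `ℤ/2` of the biadjacency matrix of the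
bipartition `(A, Aᶜ)`. -/
noncomputable def cutRank (A : Set V) : ℕ := biadjRank G A Aᶜ

/-- The neighbourhood of `u` across the cut `(A, Aᶜ)`. It is empty when `u ∉ A`, so that it
is always the support of the row of `u` in the padded matrix of `biadjRank G A Aᶜ`. -/
def crossNbhd {V : Type*} (G : SimpleGraph V) (A : Set V) (u : V) : Set V :=
  {w | u ∈ A ∧ w ∈ Aᶜ ∧ G.Adj u w}

open scoped Classical in
theorem cutRank_eq_rank_indicator (A : Set V) :
    cutRank G A = (Matrix.of fun u => (crossNbhd G A u).indicator (1 : V → ZMod 2)).rank := by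
  rw [cutRank, biadjRank]
  congr 1
  ext u w
  simp only [Matrix.of_apply, Set.indicator_apply, crossNbhd, Set.mem_ofPred_eq, Pi.one_apply]
  congr

theorem cutRank_le_ncard_crossNbhd (A : Set V) :
    cutRank G A ≤ (Set.range (crossNbhd G A) \ {∅}).ncard := by
  rw [cutRank_eq_rank_indicator]
  refine (rank_le_ncard_nonzero_rows _).trans ?_
  rw [range_row_indicator_sdiff_zero]
  exact Set.ncard_image_le (Set.toFinite _)

theorem ncard_crossNbhd_le (A : Set V) :
    (Set.range (crossNbhd G A) \ {∅}).ncard ≤ 2 ^ cutRank G A - 1 := by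
  rw [cutRank_eq_rank_indicator]
  have := ncard_nonzero_rows_le
    (Matrix.of fun u => (crossNbhd G A u).indicator (1 : V → ZMod 2))
  rwa [range_row_indicator_sdiff_zero, Set.ncard_image_of_injective _ indicator_one_injective,
    Nat.card_zmod] at this

theorem cutRank_le_card (A : Set V) : cutRank G A ≤ Fintype.card V :=
  Matrix.rank_le_card_height _

theorem cutRank_univ : cutRank G Set.univ = 0 := by
  have empty : Set.range (crossNbhd G Set.univ) \ {∅} = ∅ := by
    rw [Set.sdiff_eq_empty, Set.range_subset_iff]
    simp [crossNbhd]
  have := cutRank_le_ncard_crossNbhd G Set.univ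
  rwa [empty, Set.ncard_empty, Nat.le_zero] at this

theorem cutRank_range_le_of_labelling {α ι : Type*} [Finite ι] (φ : α → V) (l : α → ι)
    (h : ∀ a b, l a = l b → ∀ w ∉ Set.range φ, G.Adj (φ a) w ↔ G.Adj (φ b) w) :
    cutRank G (Set.range φ) ≤ Nat.card ι := by
  have factors : Function.FactorsThrough (crossNbhd G (Set.range φ) ∘ φ) l := by
    intro a b hab
    ext w
    simp only [Function.comp_apply, crossNbhd, Set.mem_ofPred_eq, Set.mem_range_self, true_and]
    exact and_congr_right fun hw => h a b hab w hw
  have covered : Set.range (crossNbhd G (Set.range φ)) \ {∅} ⊆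
      Set.range (Function.extend l (crossNbhd G (Set.range φ) ∘ φ) fun _ => ∅) := by
    rintro _ ⟨⟨u, rfl⟩, nonempty⟩
    obtain ⟨a, rfl⟩ : u ∈ Set.range φ := by
      by_contra hu
      exact nonempty (by simp [crossNbhd, hu])
    exact ⟨l a, factors.extend_apply _ a⟩
  calc cutRank G (Set.range φ) ≤ _ := cutRank_le_ncard_crossNbhd G _
    _ ≤ _ := Set.ncard_le_ncard covered (Set.finite_range _)
    _ ≤ Nat.card ι := Finite.card_range_le _

end CutRank

section Decomposition

variable {V : Type*} {P : Set V → Prop} {A : Set V}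

/-- `Decomposable P A` says that `A` is the root of a rooted binary tree of sets satisfying `P`
whose leaves are singletons and in which every other node is the disjoint union of its two
children. For `P` a bound on the cut-rank it is the rooted form of a rank decomposition. -/
inductive Decomposable (P : Set V → Prop) : Set V → Prop
  | singleton (v : V) : P {v} → Decomposable P {v}
  | union {A B : Set V} : Disjoint A B → P (A ∪ B) → Decomposable P A → Decomposable P B →
      Decomposable P (A ∪ B)

theorem Decomposable.holds (h : Decomposable P A) : P A := by
  cases h <;> assumption

theorem Decomposable.mono {Q : Set V → Prop} (hPQ : ∀ A, P A → Q A) (h : Decomposable P A) :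
    Decomposable Q A := by
  induction h with
  | singleton v hv => exact .singleton v (hPQ _ hv)
  | union hAB hP _ _ ihA ihB => exact .union hAB (hPQ _ hP) ihA ihB

theorem Decomposable.of_forall [Finite V] (hP : ∀ A, P A) (hA : A.Nonempty) :
    Decomposable P A := by
  lift A to Finset V using A.toFinite
  induction Finset.coe_nonempty.1 hA using Finset.Nonempty.cons_induction with
  | singleton v => exact Finset.coe_singleton v ▸ .singleton v (hP _)
  | cons v s hv hs ih =>
    rw [Finset.coe_cons, Set.insert_eq]
    exact .union (by simpa using hv) (hP _) (.singleton v (hP _)) (ih hs)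

end Decomposition

section ExpressionToDecomposition

variable {V : Type*} {G : SimpleGraph V} {c : ℕ}

/-- `φ` exhibits `e` as an intermediate stage in the construction of `G`: the edges of `G` still
missing between vertices of `e` are determined by the labels of their ends (through `R`), and
so are the edges of `G` leaving `e`. -/
structure IsStage (G : SimpleGraph V) (e : CW c) (φ : e.Vt → V) : Prop where
  injective : Function.Injective φ
  adj_inside : ∃ R : Fin c → Fin c → Prop, ∀ u v, u ≠ v →
    (G.Adj (φ u) (φ v) ↔ e.adj u v ∨ R (e.label u) (e.label v))
  adj_outside : ∀ u v, e.label u = e.label v → ∀ w ∉ Set.range φ,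
    (G.Adj (φ u) w ↔ G.Adj (φ v) w)

theorem IsStage.of_relabel {x y : Fin c} {e : CW c} {φ : e.Vt → V}
    (h : IsStage G (.relabel x y e) φ) : IsStage G e φ where
  injective := h.injective
  adj_inside := by
    obtain ⟨R, hR⟩ := h.adj_inside
    exact ⟨fun i j => R (if i = x then y else i) (if j = x then y else j), hR⟩
  adj_outside u v huv := h.adj_outside u v (by simp only [CW.label, huv])

theorem IsStage.of_join {x y : Fin c} {e : CW c} {φ : e.Vt → V}
    (h : IsStage G (.join x y e) φ) : IsStage G e φ where
  injective := h.injective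
  adj_inside := by
    obtain ⟨R, hR⟩ := h.adj_inside
    exact ⟨fun i j => x ≠ y ∧ (i = x ∧ j = y ∨ i = y ∧ j = x) ∨ R i j,
      fun u v huv => (hR u v huv).trans or_assoc⟩
  adj_outside := h.adj_outside

theorem IsStage.of_union_left {a b : CW c} {φ : (CW.union a b).Vt → V}
    (h : IsStage G (.union a b) φ) : IsStage G a (fun u => φ (.inl u)) where
  injective := h.injective.comp Sum.inl_injective
  adj_inside := by
    obtain ⟨R, hR⟩ := h.adj_inside
    exact ⟨R, fun u v huv => hR (.inl u) (.inl v) (Sum.inl_injective.ne huv)⟩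
  adj_outside u v huv w hw := by
    obtain ⟨R, hR⟩ := h.adj_inside
    by_cases hw' : w ∈ Set.range φ
    · obtain ⟨x | x, rfl⟩ := hw'
      · exact absurd ⟨x, rfl⟩ hw
      · rw [hR (.inl u) (.inr x) Sum.inl_ne_inr, hR (.inl v) (.inr x) Sum.inl_ne_inr]
        simp only [CW.adj, CW.label, huv]
    · exact h.adj_outside (.inl u) (.inl v) huv w hw'

theorem IsStage.of_union_right {a b : CW c} {φ : (CW.union a b).Vt → V}
    (h : IsStage G (.union a b) φ) : IsStage G b (fun u => φ (.inr u)) where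
  injective := h.injective.comp Sum.inr_injective
  adj_inside := by
    obtain ⟨R, hR⟩ := h.adj_inside
    exact ⟨R, fun u v huv => hR (.inr u) (.inr v) (Sum.inr_injective.ne huv)⟩
  adj_outside u v huv w hw := by
    obtain ⟨R, hR⟩ := h.adj_inside
    by_cases hw' : w ∈ Set.range φ
    · obtain ⟨x | x, rfl⟩ := hw'
      · rw [hR (.inr u) (.inl x) Sum.inr_ne_inl, hR (.inr v) (.inl x) Sum.inr_ne_inl]
        simp only [CW.adj, CW.label, huv]
      · exact absurd ⟨x, rfl⟩ hw
    · exact h.adj_outside (.inr u) (.inr v) huv w hw'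

theorem IsStage.cutRank_le [Fintype V] {e : CW c} {φ : e.Vt → V} (h : IsStage G e φ) :
    cutRank G (Set.range φ) ≤ c :=
  (cutRank_range_le_of_labelling G φ e.label h.adj_outside).trans_eq (Nat.card_fin c)

theorem IsStage.decomposable [Fintype V] {e : CW c} {φ : e.Vt → V} (h : IsStage G e φ) :
    Decomposable (cutRank G · ≤ c) (Set.range φ) := by
  induction e with
  | single l =>
    have range_eq : Set.range φ = {φ ()} := Set.range_unique (ι := Unit)
    exact range_eq ▸ .singleton _ (range_eq ▸ h.cutRank_le)
  | union a b iha ihb =>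
    have range_eq := Sum.range_eq φ
    refine (range_eq ▸ Decomposable.union ?_ ?_ (iha h.of_union_left) (ihb h.of_union_right) :)
    · exact Set.disjoint_range_iff.2 fun u v => h.injective.ne Sum.inl_ne_inr
    · exact range_eq ▸ h.cutRank_le
  | relabel x y e ih => exact ih h.of_relabel
  | join x y e ih => exact ih h.of_join

/-- `c` labels suffice to build `G`. -/
def HasCliqueExpression (G : SimpleGraph V) (c : ℕ) : Prop :=
  ∃ (e : CW c) (φ : V ≃ e.Vt), ∀ u v : V, G.Adj u v ↔ e.adj (φ u) (φ v)

theorem HasCliqueExpression.decomposable [Fintype V] (h : HasCliqueExpression G c) :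
    Decomposable (cutRank G · ≤ c) Set.univ := by
  obtain ⟨e, φ, hφ⟩ := h
  have range_eq : Set.range φ.symm = Set.univ := φ.symm.surjective.range_eq
  have stage : IsStage G e φ.symm :=
    { injective := φ.symm.injective
      adj_inside := ⟨fun _ _ => False, fun u v _ => by simp [hφ]⟩
      adj_outside := fun _ _ _ w hw => absurd (range_eq ▸ Set.mem_univ w) hw }
  exact range_eq ▸ stage.decomposable

end ExpressionToDecomposition

section BridgeSum

variable {W W₁ W₂ : Type*}

/-- Two graphs joined by one new edge between `p` and `q`. -/
def bridgeSum (T₁ : SimpleGraph W₁) (T₂ : SimpleGraph W₂) (p : W₁) (q : W₂) :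
    SimpleGraph (W₁ ⊕ W₂) :=
  (T₁ ⊕g T₂) ⊔ SimpleGraph.edge (.inl p) (.inr q)

/-- The edge `e` is the only edge of `T` between `S` and its complement. -/
def IsEdgeCut (T : SimpleGraph W) (e : Sym2 W) (S : Set W) : Prop :=
  ∀ x y, T.Adj x y → (s(x, y) = e ↔ ¬(x ∈ S ↔ y ∈ S))

theorem IsEdgeCut.mem_iff_of_reachable {T : SimpleGraph W} {e : Sym2 W} {S : Set W}
    (h : IsEdgeCut T e S) {x y : W} (hxy : (T.deleteEdges {e}).Reachable x y) :
    x ∈ S ↔ y ∈ S := by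
  obtain ⟨walk⟩ := hxy
  induction walk with
  | nil => rfl
  | cons hadj _ ih =>
    rw [SimpleGraph.deleteEdges_adj] at hadj
    exact (not_not.1 (mt (h _ _ hadj.1).2 hadj.2)).trans ih

theorem isTree_of_isEdgeCut {T : SimpleGraph W} (hT : T.Connected)
    (h : ∀ e ∈ T.edgeSet, ∃ S, IsEdgeCut T e S) : T.IsTree := by
  refine ⟨hT, SimpleGraph.isAcyclic_iff_forall_adj_isBridge.2 fun x y hxy => ?_⟩
  obtain ⟨S, hS⟩ := h s(x, y) hxy
  rw [SimpleGraph.isBridge_iff]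
  exact fun hreach => (hS x y hxy).1 rfl (hS.mem_iff_of_reachable hreach)

variable {T₁ : SimpleGraph W₁} {T₂ : SimpleGraph W₂} {p : W₁} {q : W₂}

theorem bridgeSum_adj_inl_inl {x y : W₁} :
    (bridgeSum T₁ T₂ p q).Adj (.inl x) (.inl y) ↔ T₁.Adj x y := by
  simp [bridgeSum, SimpleGraph.edge_adj]

theorem bridgeSum_adj_inr_inr {x y : W₂} :
    (bridgeSum T₁ T₂ p q).Adj (.inr x) (.inr y) ↔ T₂.Adj x y := by
  simp [bridgeSum, SimpleGraph.edge_adj]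

theorem bridgeSum_adj_inl_inr {x : W₁} {y : W₂} :
    (bridgeSum T₁ T₂ p q).Adj (.inl x) (.inr y) ↔ x = p ∧ y = q := by
  simp [bridgeSum, SimpleGraph.edge_adj]

theorem bridgeSum_adj_inr_inl {x : W₂} {y : W₁} :
    (bridgeSum T₁ T₂ p q).Adj (.inr x) (.inl y) ↔ x = q ∧ y = p := by
  simp [bridgeSum, SimpleGraph.edge_adj]

theorem bridgeSum_connected (h₁ : T₁.Connected) (h₂ : T₂.Connected) :
    (bridgeSum T₁ T₂ p q).Connected :=
  h₁.sum_sup_edge h₂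

open scoped Classical in
theorem ncard_neighborSet_bridgeSum_inl [Finite W₁] (x : W₁) :
    ((bridgeSum T₁ T₂ p q).neighborSet (.inl x)).ncard =
      (T₁.neighborSet x).ncard + if x = p then 1 else 0 := by
  have neighbors : (bridgeSum T₁ T₂ p q).neighborSet (.inl x) =
      Sum.inl '' T₁.neighborSet x ∪ if x = p then {Sum.inr q} else ∅ := by
    ext (y | y) <;> split_ifs <;>
      simp [bridgeSum_adj_inl_inl, bridgeSum_adj_inl_inr, *]
  rw [neighbors]
  split_ifs with hx
  · rw [Set.union_singleton, Set.ncard_insert_of_notMem (by simp) (Set.toFinite _),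
      Set.ncard_image_of_injective _ Sum.inl_injective]
  · rw [Set.union_empty, Set.ncard_image_of_injective _ Sum.inl_injective, add_zero]

open scoped Classical in
theorem ncard_neighborSet_bridgeSum_inr [Finite W₂] (x : W₂) :
    ((bridgeSum T₁ T₂ p q).neighborSet (.inr x)).ncard =
      (T₂.neighborSet x).ncard + if x = q then 1 else 0 := by
  have neighbors : (bridgeSum T₁ T₂ p q).neighborSet (.inr x) =
      Sum.inr '' T₂.neighborSet x ∪ if x = q then {Sum.inl p} else ∅ := by
    ext (y | y) <;> split_ifs <;>
      simp [bridgeSum_adj_inr_inr, bridgeSum_adj_inr_inl, *]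
  rw [neighbors]
  split_ifs with hx
  · rw [Set.union_singleton, Set.ncard_insert_of_notMem (by simp) (Set.toFinite _),
      Set.ncard_image_of_injective _ Sum.inr_injective]
  · rw [Set.union_empty, Set.ncard_image_of_injective _ Sum.inr_injective, add_zero]

theorem IsEdgeCut.bridgeSum_inl {S : Set W₁} {x y : W₁} (h : IsEdgeCut T₁ s(x, y) S)
    (hp : p ∉ S) : IsEdgeCut (bridgeSum T₁ T₂ p q) s(.inl x, .inl y) (Sum.inl '' S) := by
  rintro (u | u) (v | v) huv
  · have := h u v (bridgeSum_adj_inl_inl.1 huv)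
    simpa using this
  · obtain ⟨rfl, rfl⟩ := bridgeSum_adj_inl_inr.1 huv
    simp [hp]
  · obtain ⟨rfl, rfl⟩ := bridgeSum_adj_inr_inl.1 huv
    simp [hp]
  · simp

theorem IsEdgeCut.bridgeSum_inr {S : Set W₂} {x y : W₂} (h : IsEdgeCut T₂ s(x, y) S)
    (hq : q ∉ S) : IsEdgeCut (bridgeSum T₁ T₂ p q) s(.inr x, .inr y) (Sum.inr '' S) := by
  rintro (u | u) (v | v) huv
  · simp
  · obtain ⟨rfl, rfl⟩ := bridgeSum_adj_inl_inr.1 huv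
    simp [hq]
  · obtain ⟨rfl, rfl⟩ := bridgeSum_adj_inr_inl.1 huv
    simp [hq]
  · have := h u v (bridgeSum_adj_inr_inr.1 huv)
    simpa using this

theorem isEdgeCut_bridge :
    IsEdgeCut (bridgeSum T₁ T₂ p q) s(.inl p, .inr q) (Set.range Sum.inr) := by
  rintro (u | u) (v | v) huv
  · simp
  · simpa using bridgeSum_adj_inl_inr.1 huv
  · simpa using bridgeSum_adj_inr_inl.1 huv
  · simp

end BridgeSum

section OpenTree

variable {V W W₁ W₂ : Type*} {P : Set V → Prop}

open scoped Classical in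
/-- `T` is a tree of degrees `1` and `3`, with its leaves labelled by `A` through `f`, from which
`k` edges at the root `ρ` are still missing. Each edge is certified by the side `S` of it away
from the root, which is required to carry a set of labels satisfying `P`. -/
structure IsOpenTree (P : Set V → Prop) (k : ℕ) (A : Set V) (T : SimpleGraph W) (ρ : W)
    (f : V → W) : Prop where
  connected : T.Connected
  degree_eq : ∀ w, (T.neighborSet w).ncard + (if w = ρ then k else 0) =
    if w ∈ f '' A then 1 else 3
  injOn : Set.InjOn f A
  exists_cut : ∀ e ∈ T.edgeSet, ∃ S, ρ ∉ S ∧ IsEdgeCut T e S ∧ P (A ∩ f ⁻¹' S)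

theorem isOpenTree_singleton (v : V) :
    IsOpenTree P 1 {v} (⊥ : SimpleGraph Unit) () fun _ => () where
  connected := .of_subsingleton
  degree_eq := by simp
  injOn := Set.injOn_singleton _ v
  exists_cut := by simp

theorem isOpenTree_empty : IsOpenTree P 3 ∅ (⊥ : SimpleGraph Unit) () fun _ => () where
  connected := .of_subsingleton
  degree_eq := by simp
  injOn := Set.injOn_empty _
  exists_cut := by simp

section SumMap

variable {A B : Set V} {f : V → W₁ ⊕ W₂} {f₁ : V → W₁} {f₂ : V → W₂}

theorem image_union_eq_of_eqOn_sum (hA : Set.EqOn f (.inl ∘ f₁) A)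
    (hB : Set.EqOn f (.inr ∘ f₂) B) :
    f '' (A ∪ B) = Sum.inl '' (f₁ '' A) ∪ Sum.inr '' (f₂ '' B) := by
  rw [Set.image_union, hA.image_eq, hB.image_eq, Set.image_comp, Set.image_comp]

theorem injOn_union_of_eqOn_sum (hA : Set.EqOn f (.inl ∘ f₁) A)
    (hB : Set.EqOn f (.inr ∘ f₂) B) (h₁ : Set.InjOn f₁ A)
    (h₂ : Set.InjOn f₂ B) : Set.InjOn f (A ∪ B) := by
  rintro u (hu | hu) v (hv | hv) huv
  · exact h₁ hu hv (Sum.inl_injective (by rwa [hA hu, hA hv] at huv))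
  · exact absurd huv (by simp [hA hu, hB hv])
  · exact absurd huv (by simp [hB hu, hA hv])
  · exact h₂ hu hv (Sum.inr_injective (by rwa [hB hu, hB hv] at huv))

theorem union_inter_preimage_of_eqOn_sum (hA : Set.EqOn f (.inl ∘ f₁) A)
    (hB : Set.EqOn f (.inr ∘ f₂) B) (S : Set (W₁ ⊕ W₂)) :
    (A ∪ B) ∩ f ⁻¹' S = A ∩ f₁ ⁻¹' (Sum.inl ⁻¹' S) ∪ B ∩ f₂ ⁻¹' (Sum.inr ⁻¹' S) := by
  rw [Set.union_inter_distrib_right, hA.inter_preimage_eq, hB.inter_preimage_eq,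
    Set.preimage_comp, Set.preimage_comp]

end SumMap

theorem IsOpenTree.bridgeSum_of_eqOn [Finite W₁] [Finite W₂] {k : ℕ} {A B : Set V}
    {T₁ : SimpleGraph W₁} {T₂ : SimpleGraph W₂} {p : W₁} {q : W₂} {f : V → W₁ ⊕ W₂}
    {f₁ : V → W₁} {f₂ : V → W₂}
    (h₁ : IsOpenTree P (k + 1) A T₁ p f₁) (h₂ : IsOpenTree P 1 B T₂ q f₂)
    (hA : Set.EqOn f (.inl ∘ f₁) A) (hB : Set.EqOn f (.inr ∘ f₂) B) (hP : P B) :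
    IsOpenTree P k (A ∪ B) (bridgeSum T₁ T₂ p q) (.inl p) f where
  connected := bridgeSum_connected h₁.connected h₂.connected
  degree_eq := by
    rw [image_union_eq_of_eqOn_sum hA hB]
    rintro (w | w)
    · rw [ncard_neighborSet_bridgeSum_inl]
      convert h₁.degree_eq w using 1
      · grind
      · congr 1
        simp
    · rw [ncard_neighborSet_bridgeSum_inr]
      convert h₂.degree_eq w using 1
      · grind
      · congr 1
        simp
  injOn := injOn_union_of_eqOn_sum hA hB h₁.injOn h₂.injOn
  exists_cut := by
    have bridge : ∃ S, .inl p ∉ S ∧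
        IsEdgeCut (bridgeSum T₁ T₂ p q) s(.inl p, .inr q) S ∧ P ((A ∪ B) ∩ f ⁻¹' S) := by
      refine ⟨Set.range Sum.inr, by simp, isEdgeCut_bridge, ?_⟩
      simpa [union_inter_preimage_of_eqOn_sum hA hB] using hP
    refine Sym2.ind ?_
    rintro (x | x) (y | y) hxy
    · obtain ⟨S, hp, hS, hP⟩ := h₁.exists_cut s(x, y) (bridgeSum_adj_inl_inl.1 hxy)
      refine ⟨Sum.inl '' S, by simpa using hp, hS.bridgeSum_inl hp, ?_⟩
      simpa [union_inter_preimage_of_eqOn_sum hA hB, Set.preimage_image_eq _ Sum.inl_injective]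
        using hP
    · obtain ⟨rfl, rfl⟩ := bridgeSum_adj_inl_inr.1 hxy
      exact bridge
    · obtain ⟨rfl, rfl⟩ := bridgeSum_adj_inr_inl.1 hxy
      exact Sym2.eq_swap ▸ bridge
    · obtain ⟨S, hq, hS, hP⟩ := h₂.exists_cut s(x, y) (bridgeSum_adj_inr_inr.1 hxy)
      refine ⟨Sum.inr '' S, by simp, hS.bridgeSum_inr hq, ?_⟩
      simpa [union_inter_preimage_of_eqOn_sum hA hB, Set.preimage_image_eq _ Sum.inr_injective]
        using hP

/-- `A` labels the leaves of some finite open tree with `k` edges missing at the root. -/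
def HasOpenTree (P : Set V → Prop) (k : ℕ) (A : Set V) : Prop :=
  ∃ (W : Type) (_ : Finite W) (T : SimpleGraph W) (ρ : W) (f : V → W), IsOpenTree P k A T ρ f

theorem HasOpenTree.union {k : ℕ} {A B : Set V} (hA : HasOpenTree P (k + 1) A)
    (hB : HasOpenTree P 1 B) (hAB : Disjoint A B) (hP : P B) : HasOpenTree P k (A ∪ B) := by
  classical
  obtain ⟨W₁, _, T₁, p, f₁, h₁⟩ := hA
  obtain ⟨W₂, _, T₂, q, f₂, h₂⟩ := hB
  exact ⟨W₁ ⊕ W₂, inferInstance, bridgeSum T₁ T₂ p q, .inl p,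
    A.piecewise (.inl ∘ f₁) (.inr ∘ f₂), h₁.bridgeSum_of_eqOn h₂ (Set.piecewise_eqOn ..)
      ((Set.piecewise_eqOn_compl ..).mono hAB.subset_compl_left) hP⟩

theorem Decomposable.hasOpenTree {A : Set V} (h : Decomposable P A) : HasOpenTree P 1 A := by
  induction h with
  | singleton v _ => exact ⟨Unit, inferInstance, ⊥, (), _, isOpenTree_singleton v⟩
  | @union A B hAB _ hA hB ihA ihB =>
    have point : HasOpenTree P 3 ∅ := ⟨Unit, inferInstance, ⊥, (), _, isOpenTree_empty⟩
    have suspended := point.union ihA (Set.empty_disjoint A) hA.holds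
    rw [Set.empty_union] at suspended
    exact suspended.union ihB hAB hB.holds

theorem Decomposable.hasOpenTree_of_nontrivial {A : Set V} (h : Decomposable P A)
    (hA : A.Nontrivial) : HasOpenTree P 0 A := by
  cases h with
  | singleton v => exact absurd hA Set.not_nontrivial_singleton
  | union hAB _ h₁ h₂ => exact h₁.hasOpenTree.union h₂.hasOpenTree hAB h₂.holds

end OpenTree

section RankDecomposition

variable {V : Type*} [Fintype V] {G : SimpleGraph V} {r : ℕ}

/-- `G` has a rank decomposition of width at most `r`. -/
def HasRankDecomposition (G : SimpleGraph V) (r : ℕ) : Prop :=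
  ∃ (W : Type) (T : SimpleGraph W), Finite W ∧ T.IsTree ∧
    (∀ w : W, (T.neighborSet w).ncard = 1 ∨ (T.neighborSet w).ncard = 3) ∧
    ∃ f : V → W, Function.Injective f ∧
      (∀ w : W, (T.neighborSet w).ncard = 1 ↔ w ∈ Set.range f) ∧
      ∀ a b : W, T.Adj a b →
        biadjRank G {v : V | (T.deleteEdges {s(a, b)}).Reachable (f v) a}
                    {v : V | (T.deleteEdges {s(a, b)}).Reachable (f v) b} ≤ r

theorem IsEdgeCut.biadjRank_reachable_le {W : Type*} {T : SimpleGraph W} {a b : W} {S : Set W}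
    (hS : IsEdgeCut T s(a, b) S) (hab : T.Adj a b) (f : V → W) :
    biadjRank G {v | (T.deleteEdges {s(a, b)}).Reachable (f v) a}
      {v | (T.deleteEdges {s(a, b)}).Reachable (f v) b} ≤ cutRank G (f ⁻¹' S) := by
  have separated := (hS a b hab).1 rfl
  have ha (v) (hv : (T.deleteEdges {s(a, b)}).Reachable (f v) a) := hS.mem_iff_of_reachable hv
  have hb (v) (hv : (T.deleteEdges {s(a, b)}).Reachable (f v) b) := hS.mem_iff_of_reachable hv
  by_cases haS : a ∈ S
  · have hbS : b ∉ S := by tauto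
    exact biadjRank_mono G (fun v hv => (ha v hv).2 haS) fun v hv => mt (hb v hv).1 hbS
  · have hbS : b ∈ S := by tauto
    rw [biadjRank_comm]
    exact biadjRank_mono G (fun v hv => (hb v hv).2 hbS) fun v hv => mt (ha v hv).1 haS

theorem HasOpenTree.hasRankDecomposition
    (h : HasOpenTree (cutRank G · ≤ r) 0 Set.univ) : HasRankDecomposition G r := by
  obtain ⟨W, hW, T, ρ, f, hT⟩ := h
  have degree_eq (w : W) := hT.degree_eq w
  simp only [ite_self, add_zero, Set.image_univ] at degree_eq
  refine ⟨W, T, hW, isTree_of_isEdgeCut hT.connected fun e he => ?_, fun w => ?_, f,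
    Set.injOn_univ.1 hT.injOn, fun w => ?_, fun a b hab => ?_⟩
  · obtain ⟨S, -, hS, -⟩ := hT.exists_cut e he
    exact ⟨S, hS⟩
  · rw [degree_eq]
    split_ifs <;> simp
  · rw [degree_eq]
    simp
  · obtain ⟨S, -, hS, hrank⟩ := hT.exists_cut s(a, b) hab
    rw [Set.univ_inter] at hrank
    exact (hS.biadjRank_reachable_le hab f).trans hrank

theorem Decomposable.hasRankDecomposition [Nontrivial V]
    (h : Decomposable (cutRank G · ≤ r) Set.univ) : HasRankDecomposition G r :=
  (h.hasOpenTree_of_nontrivial Set.nontrivial_univ).hasRankDecomposition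

end RankDecomposition

section TreeSide

variable {W : Type*} {T : SimpleGraph W} {a b x w : W}

/-- The component of `a` after deleting the edge `ab`. -/
def treeSide (T : SimpleGraph W) (a b : W) : Set W :=
  {w | (T.deleteEdges {s(a, b)}).Reachable w a}

theorem mem_treeSide_self : a ∈ treeSide T a b := SimpleGraph.Reachable.refl a

theorem mem_treeSide_iff_exists_walk :
    w ∈ treeSide T a b ↔ ∃ walk : T.Walk a w, s(a, b) ∉ walk.edges := by
  rw [treeSide, Set.mem_ofPred_eq, SimpleGraph.reachable_comm,
    SimpleGraph.reachable_deleteEdges_iff_exists_walk]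

theorem mem_treeSide_of_isPath_cons {hax : T.Adj a x} {tail : T.Walk x w}
    (h : (SimpleGraph.Walk.cons hax tail).IsPath) : w ∈ treeSide T x a :=
  mem_treeSide_iff_exists_walk.2 ⟨tail, fun hmem =>
    (SimpleGraph.Walk.cons_isPath_iff _ _).1 h |>.2 (tail.snd_mem_support_of_mem_edges hmem)⟩

theorem disjoint_treeSide (hT : T.IsAcyclic) (hab : T.Adj a b) :
    Disjoint (treeSide T a b) (treeSide T b a) := by
  have bridge := SimpleGraph.isAcyclic_iff_forall_adj_isBridge.1 hT hab
  rw [SimpleGraph.isBridge_iff] at bridge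
  rw [Set.disjoint_left]
  intro w hwa hwb
  rw [treeSide, Sym2.eq_swap] at hwb
  exact bridge ((SimpleGraph.Reachable.symm hwa).trans hwb)

theorem treeSide_union_treeSide (hT : T.Connected) (a b : W) :
    treeSide T a b ∪ treeSide T b a = Set.univ := by
  rw [Set.eq_univ_iff_forall]
  intro w
  obtain ⟨path, hpath⟩ := (hT.preconnected a w).exists_isPath
  by_cases hmem : s(a, b) ∈ path.edges
  · cases path with
    | nil => simp at hmem
    | @cons _ x _ hax tail =>
      have hx : b = x := by
        rw [SimpleGraph.Walk.edges_cons, List.mem_cons] at hmem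
        refine hmem.elim Sym2.congr_right.1 fun htail => ?_
        exact absurd (tail.fst_mem_support_of_mem_edges htail)
          ((SimpleGraph.Walk.cons_isPath_iff _ _).1 hpath).2
      exact .inr (hx ▸ mem_treeSide_of_isPath_cons hpath)
  · exact .inl (mem_treeSide_iff_exists_walk.2 ⟨path, hmem⟩)

theorem exists_mem_treeSide_of_ne (hw : w ∈ treeSide T a b) (hne : w ≠ a) :
    ∃ x, T.Adj a x ∧ x ≠ b ∧ w ∈ treeSide T x a := by
  classical
  obtain ⟨walk, hwalk⟩ := mem_treeSide_iff_exists_walk.1 hw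
  have hpath := walk.bypass_isPath
  have hbypass : s(a, b) ∉ walk.bypass.edges := fun h => hwalk (walk.edges_bypass_subset_edges h)
  cases hp : walk.bypass with
  | nil => exact absurd rfl hne
  | @cons _ x _ hax tail =>
    rw [hp] at hpath hbypass
    exact ⟨x, hax, fun hx => hbypass (by simp [hx]), mem_treeSide_of_isPath_cons hpath⟩

theorem treeSide_subset (hT : T.IsAcyclic) (hax : T.Adj a x) (hx : x ≠ b) :
    treeSide T x a ⊆ treeSide T a b := by
  classical
  intro w hw
  obtain ⟨walk, hwalk⟩ := mem_treeSide_iff_exists_walk.1 hw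
  have avoids : a ∉ walk.support := fun ha =>
    (disjoint_treeSide hT hax).notMem_of_mem_left mem_treeSide_self <|
      mem_treeSide_iff_exists_walk.2
        ⟨walk.takeUntil a ha, fun h => hwalk (walk.edges_takeUntil_subset_edges ha h)⟩
  refine mem_treeSide_iff_exists_walk.2 ⟨.cons hax walk, ?_⟩
  rw [SimpleGraph.Walk.edges_cons, List.mem_cons, Sym2.congr_right]
  exact not_or.2 ⟨hx.symm, mt walk.fst_mem_support_of_mem_edges avoids⟩

theorem treeSide_ssubset (hT : T.IsAcyclic) (hax : T.Adj a x) (hx : x ≠ b) :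
    treeSide T x a ⊂ treeSide T a b :=
  (treeSide_subset hT hax hx).ssubset_of_mem_notMem mem_treeSide_self
    ((disjoint_treeSide hT hax).notMem_of_mem_left mem_treeSide_self)

theorem treeSide_eq_insert_iUnion (hT : T.IsAcyclic) (a b : W) :
    treeSide T a b = insert a (⋃ x ∈ T.neighborSet a \ {b}, treeSide T x a) := by
  ext w
  simp only [Set.mem_insert_iff, Set.mem_iUnion, exists_prop]
  constructor
  · intro hw
    by_cases hne : w = a
    · exact .inl hne
    · obtain ⟨x, hax, hx, hwx⟩ := exists_mem_treeSide_of_ne hw hne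
      exact .inr ⟨x, ⟨hax, hx⟩, hwx⟩
  · rintro (rfl | ⟨x, ⟨hax, hx⟩, hw⟩)
    · exact mem_treeSide_self
    · exact treeSide_subset hT hax hx hw

theorem treeSide_eq_singleton (hT : T.IsAcyclic) (hab : T.Adj a b)
    (hleaf : (T.neighborSet a).ncard = 1) : treeSide T a b = {a} := by
  obtain ⟨y, hy⟩ := Set.ncard_eq_one.1 hleaf
  have hb : b ∈ ({y} : Set W) := hy ▸ hab
  rw [treeSide_eq_insert_iUnion hT, hy, Set.mem_singleton_iff.1 hb]
  simp

theorem exists_treeSide_eq_insert_union (hT : T.IsAcyclic) (hab : T.Adj a b)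
    (hinner : (T.neighborSet a).ncard = 3) :
    ∃ x y, treeSide T a b = insert a (treeSide T x a ∪ treeSide T y a) ∧
      (T.Adj a x ∧ x ≠ b) ∧ (T.Adj a y ∧ y ≠ b) ∧ Disjoint (treeSide T x a) (treeSide T y a) := by
  have hb : b ∈ T.neighborSet a := hab
  obtain ⟨x, y, hxy, others⟩ : ∃ x y, x ≠ y ∧ T.neighborSet a \ {b} = {x, y} := by
    rw [← Set.ncard_eq_two, Set.ncard_sdiff_singleton_of_mem hb, hinner]
  have hx : x ∈ T.neighborSet a \ {b} := others ▸ Set.mem_insert x {y}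
  have hy : y ∈ T.neighborSet a \ {b} := others ▸ Set.mem_insert_of_mem x rfl
  refine ⟨x, y, ?_, hx, hy,
    (disjoint_treeSide hT hy.1).mono_left (treeSide_subset hT hx.1 hxy)⟩
  rw [treeSide_eq_insert_iUnion hT, others, Set.biUnion_pair]

theorem decomposable_preimage_treeSide {V : Type*} [Finite W] {P : Set V → Prop} {f : V → W}
    (hT : T.IsAcyclic)
    (hdeg : ∀ w, (T.neighborSet w).ncard = 1 ∨ (T.neighborSet w).ncard = 3)
    (hf : Function.Injective f) (hleaf : ∀ w, (T.neighborSet w).ncard = 1 ↔ w ∈ Set.range f)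
    (hP : ∀ a b, T.Adj a b → P (f ⁻¹' treeSide T a b)) {a b : W} (hab : T.Adj a b) :
    Decomposable P (f ⁻¹' treeSide T a b) := by
  induction hS : treeSide T a b using WellFoundedLT.induction generalizing a b with
  | ind S ih =>
    subst hS
    have hPab := hP a b hab
    rcases hdeg a with leaf | inner
    · obtain ⟨v, rfl⟩ := (hleaf a).1 leaf
      have preimage_eq : f ⁻¹' {f v} = {v} := by simpa using hf.preimage_image {v}
      rw [treeSide_eq_singleton hT hab leaf, preimage_eq] at hPab ⊢
      exact .singleton v hPab
    · obtain ⟨x, y, side_eq, hx, hy, hxy⟩ := exists_treeSide_eq_insert_union hT hab inner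
      have ha : a ∉ Set.range f := fun ha => by simp [(hleaf a).2 ha] at inner
      have preimage_eq : f ⁻¹' treeSide T a b = f ⁻¹' treeSide T x a ∪ f ⁻¹' treeSide T y a := by
        rw [side_eq, Set.insert_eq, Set.preimage_union, Set.preimage_singleton_eq_empty.2 ha,
          Set.empty_union, Set.preimage_union]
      rw [preimage_eq] at hPab ⊢
      exact .union (hxy.preimage f) hPab (ih _ (treeSide_ssubset hT hx.1 hx.2) hx.1.symm rfl)
        (ih _ (treeSide_ssubset hT hy.1 hy.2) hy.1.symm rfl)

end TreeSide

theorem HasRankDecomposition.decomposable {V : Type*} [Fintype V] [Nonempty V]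
    {G : SimpleGraph V} {r : ℕ} (h : HasRankDecomposition G r) :
    Decomposable (cutRank G · ≤ r) Set.univ := by
  obtain ⟨W, T, hW, hT, hdeg, f, hf, hleaf, hrank⟩ := h
  have cutRank_le (a b) (hab : T.Adj a b) : cutRank G (f ⁻¹' treeSide T a b) ≤ r := by
    refine (biadjRank_mono G subset_rfl fun v hv => ?_).trans (hrank a b hab)
    have := (treeSide_union_treeSide hT.connected a b ▸ Set.mem_univ (f v)).resolve_left hv
    rwa [treeSide, Sym2.eq_swap] at this
  obtain ⟨v⟩ := ‹Nonempty V›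
  obtain ⟨b, neighbors⟩ := Set.ncard_eq_one.1 ((hleaf (f v)).2 ⟨v, rfl⟩)
  have hadj : T.Adj (f v) b := (T.mem_neighborSet _ _).1 (neighbors ▸ rfl)
  have side {a b} (hab : T.Adj a b) :=
    decomposable_preimage_treeSide (P := (cutRank G · ≤ r)) hT.isAcyclic hdeg hf hleaf
      cutRank_le hab
  have univ_eq : f ⁻¹' treeSide T (f v) b ∪ f ⁻¹' treeSide T b (f v) = Set.univ := by
    rw [← Set.preimage_union, treeSide_union_treeSide hT.connected, Set.preimage_univ]
  have root_le : cutRank G Set.univ ≤ r := (cutRank_univ G).trans_le r.zero_le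
  rw [← univ_eq] at root_le ⊢
  exact .union ((disjoint_treeSide hT.isAcyclic hadj).preimage f) root_le (side hadj)
    (side hadj.symm)

section Relabelling

theorem exists_perm_comp_idempotent {α : Type*} [Finite α] (g : α → α) :
    ∃ (s : Equiv.Perm α) (e : α → α), (∀ i, e (e i) = e i) ∧ ∀ i, s (e i) = g i := by
  have := Fintype.ofFinite α
  classical
  let rep := Set.rangeSplitting g
  have apply_rep (i : Set.range g) : g (rep i) = i := Set.apply_rangeSplitting g i
  let ranges : Set.range rep ≃ Set.range g :=
    (Equiv.ofInjective rep (Set.rangeSplitting_injective g)).symm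
  refine ⟨ranges.extendSubtype, fun i => rep ⟨g i, i, rfl⟩, fun i => ?_, fun i => ?_⟩
  · exact congrArg rep (Subtype.ext (apply_rep _))
  · rw [ranges.extendSubtype_apply_of_mem _ ⟨_, rfl⟩]
    simp [ranges]

theorem CW.exists_permute_labels {k : ℕ} (s : Equiv.Perm (Fin k)) (e : CW k) :
    ∃ (e' : CW k) (φ : e'.Vt → e.Vt), Function.Bijective φ ∧
      (∀ u v, e'.adj u v ↔ e.adj (φ u) (φ v)) ∧ ∀ u, e'.label u = s (e.label (φ u)) := by
  induction e with
  | single i => exact ⟨.single (s i), id, Function.bijective_id, fun _ _ => .rfl, fun _ => rfl⟩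
  | union a b iha ihb =>
    obtain ⟨a', φ, hφ, adj_a, label_a⟩ := iha
    obtain ⟨b', ψ, hψ, adj_b, label_b⟩ := ihb
    refine ⟨.union a' b', Sum.map φ ψ, Sum.map_bijective.2 ⟨hφ, hψ⟩, ?_, ?_⟩
    · rintro (u | u) (v | v)
      exacts [adj_a u v, .rfl, .rfl, adj_b u v]
    · rintro (u | u)
      exacts [label_a u, label_b u]
  | relabel x y a ih =>
    obtain ⟨a', φ, hφ, adj_a, label_a⟩ := ih
    refine ⟨.relabel (s x) (s y) a', φ, hφ, adj_a, fun (u : a'.Vt) => ?_⟩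
    simp only [CW.label, label_a, s.injective.eq_iff, apply_ite s]
  | join x y a ih =>
    obtain ⟨a', φ, hφ, adj_a, label_a⟩ := ih
    refine ⟨.join (s x) (s y) a', φ, hφ, fun (u v : a'.Vt) => ?_, label_a⟩
    simp only [CW.adj, adj_a, label_a, ne_eq, s.injective.eq_iff]

end Relabelling

section Constructible

variable {V : Type*} {k : ℕ} {A B : Set V} {E E' : V → V → Prop} {l l' : V → Fin k}

/-- Some expression over `k` labels builds the graph on `A` with adjacency `E` and labelling `l`.
The values of `E` and `l` outside `A` are irrelevant. -/
def Constructible (A : Set V) (E : V → V → Prop) (l : V → Fin k) : Prop :=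
  ∃ (e : CW k) (φ : e.Vt → V), Function.Injective φ ∧ Set.range φ = A ∧
    (∀ u v, e.adj u v ↔ E (φ u) (φ v)) ∧ ∀ u, e.label u = l (φ u)

namespace Constructible

theorem congr (h : Constructible A E l) (hE : ∀ u ∈ A, ∀ v ∈ A, E u v ↔ E' u v)
    (hl : ∀ u ∈ A, l u = l' u) : Constructible A E' l' := by
  obtain ⟨e, φ, inj, rfl, adj, label⟩ := h
  exact ⟨e, φ, inj, rfl, fun u v => (adj u v).trans (hE _ ⟨u, rfl⟩ _ ⟨v, rfl⟩),
    fun u => (label u).trans (hl _ ⟨u, rfl⟩)⟩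

theorem congr_adj (h : Constructible A E l) (hE : ∀ u ∈ A, ∀ v ∈ A, E u v ↔ E' u v) :
    Constructible A E' l :=
  h.congr hE fun _ _ => rfl

theorem congr_label (h : Constructible A E l) (hl : ∀ u ∈ A, l u = l' u) :
    Constructible A E l' :=
  h.congr (fun _ _ _ _ => .rfl) hl

theorem singleton (v : V) (l : V → Fin k) : Constructible {v} (fun _ _ => False) l :=
  ⟨.single (l v), fun _ => v, Function.injective_of_subsingleton (α := Unit) _,
    Set.range_const (ι := Unit), fun _ _ => .rfl, fun _ => rfl⟩

theorem union (hA : Constructible A E l) (hB : Constructible B E l) (hAB : Disjoint A B) :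
    Constructible (A ∪ B) (fun u v => E u v ∧ (u ∈ A ∧ v ∈ A ∨ u ∈ B ∧ v ∈ B)) l := by
  obtain ⟨a, φ, injA, rfl, adjA, labelA⟩ := hA
  obtain ⟨b, ψ, injB, rfl, adjB, labelB⟩ := hB
  have ne (x y) : φ x ≠ ψ y := Set.disjoint_range_iff.1 hAB x y
  refine ⟨.union a b, Sum.elim φ ψ, injA.sumElim injB ne, Set.Sum.elim_range φ ψ, ?_, ?_⟩
  · rintro (u | u) (v | v) <;> simp [CW.adj, adjA, adjB, ne, fun x y => (ne x y).symm]
  · rintro (u | u)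
    exacts [labelA u, labelB u]

theorem relabel (h : Constructible A E l) (x y : Fin k) :
    Constructible A E fun u => if l u = x then y else l u := by
  obtain ⟨e, φ, inj, range_eq, adj, label⟩ := h
  exact ⟨.relabel x y e, φ, inj, range_eq, adj,
    fun (u : e.Vt) => by simp only [CW.label, label]⟩

theorem join (h : Constructible A E l) (x y : Fin k) :
    Constructible A (fun u v => E u v ∨ x ≠ y ∧ (l u = x ∧ l v = y ∨ l u = y ∧ l v = x)) l := by
  obtain ⟨e, φ, inj, range_eq, adj, label⟩ := h
  exact ⟨.join x y e, φ, inj, range_eq,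
    fun (u v : e.Vt) => by simp only [CW.adj, adj, label], label⟩

theorem join_all (h : Constructible A E l) (H : SimpleGraph (Fin k)) :
    Constructible A (fun u v => E u v ∨ H.Adj (l u) (l v)) l := by
  classical
  suffices ∀ D : Finset (Sym2 (Fin k)), Constructible A
      (fun u v => E u v ∨ l u ≠ l v ∧ s(l u, l v) ∈ D) l from
    (this H.edgeFinset).congr_adj fun u _ v _ => by
      have := fun h : H.Adj (l u) (l v) => h.ne
      simp only [SimpleGraph.mem_edgeFinset, SimpleGraph.mem_edgeSet]
      tauto
  intro D
  induction D using Finset.induction_on with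
  | empty => simpa using h
  | insert p D _ ih =>
    induction p with | _ x y
    refine (ih.join x y).congr_adj fun u _ v _ => ?_
    simp only [Finset.mem_insert, Sym2.eq_iff]
    grind

theorem perm (h : Constructible A E l) (s : Equiv.Perm (Fin k)) :
    Constructible A E fun u => s (l u) := by
  obtain ⟨e, φ, inj, range_eq, adj, label⟩ := h
  obtain ⟨e', ψ, bij, adj', label'⟩ := CW.exists_permute_labels s e
  refine ⟨e', φ ∘ ψ, inj.comp bij.1, ?_, fun u v => (adj' u v).trans (adj _ _), fun u => ?_⟩
  · rw [bij.2.range_comp, range_eq]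
  · rw [label', label, Function.comp_apply]

theorem comp_idempotent (h : Constructible A E l) {g : Fin k → Fin k}
    (hg : ∀ i, g (g i) = g i) : Constructible A E fun u => g (l u) := by
  suffices ∀ D : Finset (Fin k), Constructible A E fun u => if l u ∈ D then g (l u) else l u from
    (this Finset.univ).congr_label (by simp)
  intro D
  induction D using Finset.induction_on with
  | empty => simpa using h
  | insert p D _ ih =>
    refine (ih.relabel p (g p)).congr_label fun u _ => ?_
    grind

theorem comp (h : Constructible A E l) (g : Fin k → Fin k) :
    Constructible A E fun u => g (l u) := by
  obtain ⟨s, e, idem, factor⟩ := exists_perm_comp_idempotent g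
  simpa only [factor] using (h.comp_idempotent idem).perm s

theorem coarsen (h : Constructible A E l) (hl : ∀ u ∈ A, ∀ v ∈ A, l u = l v → l' u = l' v) :
    Constructible A E l' := by
  have factors : (A.domRestrict l').FactorsThrough (A.domRestrict l) :=
    fun u v huv => hl u u.2 v v.2 huv
  exact (h.comp (Function.extend (A.domRestrict l) (A.domRestrict l') id)).congr_label
    fun u hu => factors.extend_apply id ⟨u, hu⟩

variable {G : SimpleGraph V}

theorem union_of_separated (hA : Constructible A G.Adj l) (hB : Constructible B G.Adj l)
    (hAB : Disjoint A B)
    (separated : ∀ u ∈ A, ∀ v ∈ B, G.Adj u v → l u ∉ l '' B ∧ l v ∉ l '' A)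
    (determined : ∀ u ∈ A, ∀ u' ∈ A, ∀ v ∈ B, ∀ v' ∈ B, l u = l u' → l v = l v' →
      G.Adj u v → G.Adj u' v') :
    Constructible (A ∪ B) G.Adj l := by
  let H : SimpleGraph (Fin k) :=
    .fromRel fun x y => ∃ u ∈ A, ∃ v ∈ B, G.Adj u v ∧ l u = x ∧ l v = y
  refine ((hA.union hB hAB).join_all H).congr_adj ?_
  have hH (x y) : H.Adj x y ↔ _ := SimpleGraph.fromRel_adj _ x y
  have not_adj_A {u v} (hu : u ∈ A) (hv : v ∈ A) : ¬ H.Adj (l u) (l v) := by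
    grind
  have not_adj_B {u v} (hu : u ∈ B) (hv : v ∈ B) : ¬ H.Adj (l u) (l v) := by
    grind
  have adj_cross {u v} (hu : u ∈ A) (hv : v ∈ B) : H.Adj (l u) (l v) ↔ G.Adj u v := by
    grind
  rintro u (hu | hu) v (hv | hv)
  · simp [hu, hv, not_adj_A hu hv]
  · simp only [adj_cross hu hv]
    tauto
  · rw [H.adj_comm, adj_cross hv hu, G.adj_comm v u]
    tauto
  · simp [hu, hv, not_adj_B hu hv]

end Constructible

end Constructible

section DecompositionToExpression

variable {V : Type*} {G : SimpleGraph V} {A B : Set V} {k m : ℕ}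

theorem crossNbhd_eq_empty {u : V} (hu : u ∉ A) : crossNbhd G A u = ∅ := by
  simp [crossNbhd, hu]

theorem crossNbhd_union (u : V) :
    crossNbhd G (A ∪ B) u = crossNbhd G A u \ B ∪ crossNbhd G B u \ A := by
  ext w
  simp only [crossNbhd, Set.mem_union, Set.mem_sdiff, Set.mem_compl_iff, Set.mem_ofPred_eq]
  tauto

theorem exists_injOn_range_crossNbhd_prod [Finite V] (hAB : Disjoint A B) (hk : 2 * m + 1 ≤ k)
    (hA : (Set.range (crossNbhd G A) \ {∅}).ncard ≤ m)
    (hB : (Set.range (crossNbhd G B) \ {∅}).ncard ≤ m) :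
    ∃ j : Set V × Set V → Fin k,
      Set.InjOn j (Set.range fun u => (crossNbhd G A u, crossNbhd G B u)) := by
  set pairs : Set (Set V × Set V) := Set.range fun u => (crossNbhd G A u, crossNbhd G B u)
  have covered : pairs ⊆ insert (∅, ∅) ((·, ∅) '' (Set.range (crossNbhd G A) \ {∅}) ∪
      (∅, ·) '' (Set.range (crossNbhd G B) \ {∅})) := by
    rintro _ ⟨u, rfl⟩
    have : crossNbhd G A u = ∅ ∨ crossNbhd G B u = ∅ := by
      by_cases hu : u ∈ A
      · exact .inr (crossNbhd_eq_empty (hAB.notMem_of_mem_left hu))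
      · exact .inl (crossNbhd_eq_empty hu)
    grind
  have card_le : pairs.ncard ≤ k :=
    calc pairs.ncard ≤ _ := (Set.ncard_le_ncard covered).trans (Set.ncard_insert_le _ _)
      _ ≤ m + m + 1 := Nat.succ_le_succ <| (Set.ncard_union_le _ _).trans <|
        add_le_add ((Set.ncard_image_le (Set.toFinite _)).trans hA)
          ((Set.ncard_image_le (Set.toFinite _)).trans hB)
      _ ≤ k := by omega
  have encard_le : pairs.encard ≤ (Set.univ : Set (Fin k)).encard := by
    rw [← pairs.toFinite.cast_ncard_eq, Set.encard_univ, ENat.card_eq_coe_natCard, Nat.card_fin]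
    exact_mod_cast card_le
  have : NeZero k := ⟨by omega⟩
  obtain ⟨j, -, inj⟩ := pairs.toFinite.exists_injOn_of_encard_le encard_le
  exact ⟨j, inj⟩

/-- `A` can be built so that the label of each vertex is any prescribed function `ν` of its
neighbourhood across the cut `(A, Aᶜ)`. -/
def FreelyConstructible (G : SimpleGraph V) (k : ℕ) (A : Set V) : Prop :=
  ∀ ν : Set V → Fin k, Constructible A G.Adj fun u => ν (crossNbhd G A u)

theorem FreelyConstructible.singleton (v : V) : FreelyConstructible G k {v} := fun _ =>
  (Constructible.singleton v _).congr_adj fun u hu w hw => by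
    obtain rfl : u = v := hu
    obtain rfl : w = u := hw
    simp

theorem FreelyConstructible.union (hAB : Disjoint A B) {j : Set V × Set V → Fin k}
    (hj : Set.InjOn j (Set.range fun u => (crossNbhd G A u, crossNbhd G B u)))
    (hA : FreelyConstructible G k A) (hB : FreelyConstructible G k B) :
    FreelyConstructible G k (A ∪ B) := by
  intro ν
  set l : V → Fin k := fun u => j (crossNbhd G A u, crossNbhd G B u)
  have l_inj {u v} (h : l u = l v) :
      crossNbhd G A u = crossNbhd G A v ∧ crossNbhd G B u = crossNbhd G B v :=
    Prod.ext_iff.1 (hj ⟨u, rfl⟩ ⟨v, rfl⟩ h)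
  have notMem_B {u} (hu : u ∈ A) : u ∉ B := hAB.notMem_of_mem_left hu
  have notMem_A {u} (hu : u ∈ B) : u ∉ A := hAB.notMem_of_mem_right hu
  have buildA : Constructible A G.Adj l := (hA fun s => j (s, ∅)).congr_label fun u hu => by
    simp only [l, crossNbhd_eq_empty (notMem_B hu)]
  have buildB : Constructible B G.Adj l := (hB fun s => j (∅, s)).congr_label fun u hu => by
    simp only [l, crossNbhd_eq_empty (notMem_A hu)]
  have mem_A {u v} (hu : u ∈ A) (hv : v ∈ B) : v ∈ crossNbhd G A u ↔ G.Adj u v := by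
    simp [crossNbhd, hu, notMem_A hv]
  have mem_B {u v} (hu : u ∈ A) (hv : v ∈ B) : u ∈ crossNbhd G B v ↔ G.Adj u v := by
    simp [crossNbhd, hv, notMem_B hu, G.adj_comm]
  refine (buildA.union_of_separated buildB hAB ?_ ?_).coarsen fun u _ v _ huv => ?_
  · rintro u hu v hv adj
    constructor
    · rintro ⟨v', hv', eq⟩
      rw [← mem_A hu hv, ← (l_inj eq).1, crossNbhd_eq_empty (notMem_A hv')] at adj
      exact adj
    · rintro ⟨u', hu', eq⟩
      rw [← mem_B hu hv, ← (l_inj eq).2, crossNbhd_eq_empty (notMem_B hu')] at adj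
      exact adj
  · rintro u hu u' hu' v hv v' hv' equ eqv adj
    rwa [← mem_A hu hv, (l_inj equ).1, mem_A hu' hv, ← mem_B hu' hv, (l_inj eqv).2,
      mem_B hu' hv'] at adj
  · rw [crossNbhd_union, crossNbhd_union, (l_inj huv).1, (l_inj huv).2]

theorem Decomposable.freelyConstructible [Finite V] (hk : 2 * m + 1 ≤ k)
    (h : Decomposable (fun A => (Set.range (crossNbhd G A) \ {∅}).ncard ≤ m) A) :
    FreelyConstructible G k A := by
  induction h with
  | singleton v _ => exact .singleton v
  | union hAB _ hA hB ihA ihB =>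
    obtain ⟨j, hj⟩ := exists_injOn_range_crossNbhd_prod hAB hk hA.holds hB.holds
    exact ihA.union hAB hj ihB

theorem Constructible.hasCliqueExpression {l : V → Fin k}
    (h : Constructible Set.univ G.Adj l) : HasCliqueExpression G k := by
  obtain ⟨e, φ, inj, range_eq, adj, -⟩ := h
  let ψ : e.Vt ≃ V := .ofBijective φ ⟨inj, Set.range_eq_univ.1 range_eq⟩
  have apply_symm (u : V) : φ (ψ.symm u) = u := ψ.apply_symm_apply u
  exact ⟨e, ψ.symm, fun u v => by rw [adj, apply_symm, apply_symm]⟩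

theorem Decomposable.hasCliqueExpression [Fintype V] {r : ℕ}
    (h : Decomposable (cutRank G · ≤ r) Set.univ) : HasCliqueExpression G (2 ^ (r + 1) - 1) := by
  have two_pow_pos : 0 < 2 ^ r := Nat.two_pow_pos r
  have few_nbhds : Decomposable
      (fun A => (Set.range (crossNbhd G A) \ {∅}).ncard ≤ 2 ^ r - 1) Set.univ :=
    h.mono fun A hA => (ncard_crossNbhd_le G A).trans
      (Nat.sub_le_sub_right (Nat.pow_le_pow_right two_pos hA) 1)
  have labels : 2 * (2 ^ r - 1) + 1 ≤ 2 ^ (r + 1) - 1 := by omega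
  exact (few_nbhds.freelyConstructible labels fun _ => ⟨0, by omega⟩).hasCliqueExpression

end DecompositionToExpression

/-- Let `G` be a finite simple graph with at least 2 vertices,
let `r` be its rank-width and `c` its clique-width.  Then `r ≤ c` and
`c ≤ 2^(r+1) − 1`. -/
theorem stmt_12 {V : Type*} [Fintype V] (G : SimpleGraph V)
    (hV : 2 ≤ Fintype.card V) :
    rankWidth G ≤ cliqueWidth G ∧
    cliqueWidth G ≤ 2 ^ (rankWidth G + 1) - 1 := by
  have : Nontrivial V := Fintype.one_lt_card_iff_nontrivial.1 hV
  have decomposable : Decomposable (cutRank G · ≤ Fintype.card V) Set.univ :=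
    .of_forall (cutRank_le_card G) Set.univ_nonempty
  have rank : HasRankDecomposition G (rankWidth G) :=
    Nat.sInf_mem (s := {r | HasRankDecomposition G r}) ⟨_, decomposable.hasRankDecomposition⟩
  have clique : HasCliqueExpression G (cliqueWidth G) :=
    Nat.sInf_mem (s := {c | HasCliqueExpression G c}) ⟨_, decomposable.hasCliqueExpression⟩
  exact ⟨Nat.sInf_le clique.decomposable.hasRankDecomposition,
    Nat.sInf_le rank.decomposable.hasCliqueExpression⟩
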